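/- Let n ≥ 1, p₁ ≠ 0, p₂ ∈ ℝ, and let A0, Π0, λ : ℝ × ℝⁿ → ℝ and A, Π : ℝ × ℝⁿ → ℝⁿ be smooth fields satisfying the canonical Stueckelberg–Proca equations: ∂₀A0 = λΠ0 − Σᵢ∂ᵢAᵢ; ∂₀Π0 = −p₂A0 − Σᵢ∂ᵢΠᵢ; ∂₀Aᵢ = p₁Πᵢ − ∂ᵢA0; ∂₀Πᵢ = p₂Aᵢ − ∂ᵢΠ0 + (1/p₁)(ΔAᵢ − ∂ᵢΣⱼ∂ⱼAⱼ). Assume that for every compact time interval there is a compact set K ⊆ ℝⁿ containing the spatial supports of all fields A0, Π0, A, Π at all times in that interval, and that λ and ∂₀λ are bounded on compact time intervals. Define the Hamiltonian density ℋ = (λ/2)Π0² − Π0·Σₘ∂ₘAₘ + (p₁/2)Σₘ Πₘ² − Σₘ Πₘ∂ₘA0 + (1/(2p₁))(Σₘ,ₙ(∂ₘAₙ)² − Σₘ,ₙ(∂ₙAₘ)(∂ₘAₙ)) + (p₂/2)A0² − (p₂/2)Σₘ Aₘ² and the total Hamiltonian H_C(x⁰) = ∫_{ℝⁿ} ℋ(x⁰,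 x) dx. Then for all x⁰, d/dx⁰ H_C(x⁰) = ∫_{ℝⁿ} (1/2)(∂₀λ)(x⁰,x)·Π0(x⁰,x)² dx. In particular, if λ is independent of x⁰ or Π0 ≡ 0, then H_C is constant. -/

import Mathlib

/-!
The proof is the local form of energy conservation. Differentiating `ℋ` in time and inserting the
field equations gives, at every point, `∂₀ℋ = ½ (∂₀λ) Π₀² + ∑ₘ ∂ₘFₘ` (`pd0_hamDens`) with the
energy current
`Fₘ = -Π₀ ∂₀Aₘ - Πₘ ∂₀A₀ + (1/p₁) ∑ₖ (∂ₘAₖ - ∂ₖAₘ) ∂₀Aₖ` (`energyFlux`).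
The algebra (`pointwise_balance`) rests on evaluating `∑ₘ ∂₀Πₘ ∂₀Aₘ` with each of the two vector
equations, and on the symmetry of second derivatives.

All fields vanish outside a fixed compact set of space for times near a given one, so one may
differentiate under the integral (`hasDerivAt_integral_slice`), and the divergence integrates to
zero (`integral_pdS_eq_zero`). Only the source term `½ (∂₀λ) Π₀²` survives; it vanishes when `λ` is
time independent or `Π₀ = 0`, and then `H_C` has zero derivative.
-/

open scoped BigOperators
open MeasureTheory

/-- Partial derivative in the time direction `x⁰` on `ℝ × ℝⁿ`. -/
noncomputable def pd0 {n : ℕ} (f : ℝ × (Fin n → ℝ) → ℝ) (p : ℝ × (Fin n → ℝ)) : ℝ :=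
  deriv (fun s => f (s, p.2)) p.1

/-- Partial derivative in the spatial direction `xⁱ` on `ℝ × ℝⁿ`. -/
noncomputable def pdS {n : ℕ} (i : Fin n) (f : ℝ × (Fin n → ℝ) → ℝ)
    (p : ℝ × (Fin n → ℝ)) : ℝ :=
  deriv (fun s => f (p.1, Function.update p.2 i s)) (p.2 i)

/-- Hamiltonian density of the Stueckelberg–Proca canonical system. -/
noncomputable def hamDens {n : ℕ} (p₁ p₂ : ℝ)
    (A0 Pi0 lam : ℝ × (Fin n → ℝ) → ℝ) (A Pi : Fin n → ℝ × (Fin n → ℝ) → ℝ)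
    (p : ℝ × (Fin n → ℝ)) : ℝ :=
  lam p / 2 * Pi0 p ^ 2 - Pi0 p * ∑ m : Fin n, pdS m (A m) p
    + p₁ / 2 * ∑ m : Fin n, Pi m p ^ 2
    - ∑ m : Fin n, Pi m p * pdS m A0 p
    + 1 / (2 * p₁) * ((∑ m : Fin n, ∑ l : Fin n, (pdS m (A l) p) ^ 2)
        - ∑ m : Fin n, ∑ l : Fin n, pdS l (A m) p * pdS m (A l) p)
    + p₂ / 2 * A0 p ^ 2 - p₂ / 2 * ∑ m : Fin n, A m p ^ 2

open Filter Topology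

/-! ### Partial derivatives of smooth fields -/

lemma pd0_hasDerivAt {n : ℕ} {f : ℝ × (Fin n → ℝ) → ℝ} (hf : ContDiff ℝ (⊤ : ℕ∞) f)
    (t : ℝ) (x : Fin n → ℝ) : HasDerivAt (fun s => f (s, x)) (pd0 f (t, x)) t := by
  have hd : Differentiable ℝ f := hf.differentiable (by simp)
  have : DifferentiableAt ℝ (fun s => f (s, x)) t := by fun_prop
  exact this.hasDerivAt

lemma pdS_hasDerivAt {n : ℕ} {f : ℝ × (Fin n → ℝ) → ℝ} (hf : ContDiff ℝ (⊤ : ℕ∞) f)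
    (i : Fin n) (t : ℝ) (x : Fin n → ℝ) :
    HasDerivAt (fun s => f (t, Function.update x i s)) (pdS i f (t, x)) (x i) := by
  have hd : Differentiable ℝ f := hf.differentiable (by simp)
  have hu : DifferentiableAt ℝ (fun s => Function.update x i s) (x i) :=
    (hasDerivAt_update x i (x i)).differentiableAt
  have : DifferentiableAt ℝ (fun s => f (t, Function.update x i s)) (x i) := by fun_prop
  exact this.hasDerivAt

lemma pd0_eq_fderiv {n : ℕ} {f : ℝ × (Fin n → ℝ) → ℝ} (hf : ContDiff ℝ (⊤ : ℕ∞) f) :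
    pd0 f = fun p => fderiv ℝ f p (1, 0) := by
  funext ⟨t, x⟩
  have hd : Differentiable ℝ f := hf.differentiable (by simp)
  have hl : HasDerivAt (fun s : ℝ => (s, x)) (1, 0) t :=
    (hasDerivAt_id t).prodMk (hasDerivAt_const t x)
  exact ((hd (t, x)).hasFDerivAt.comp_hasDerivAt t hl).deriv

lemma pdS_eq_fderiv {n : ℕ} {f : ℝ × (Fin n → ℝ) → ℝ} (hf : ContDiff ℝ (⊤ : ℕ∞) f)
    (i : Fin n) : pdS i f = fun p => fderiv ℝ f p (0, Pi.single i 1) := by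
  funext ⟨t, x⟩
  have hd : Differentiable ℝ f := hf.differentiable (by simp)
  have hl : HasDerivAt (fun s : ℝ => (t, Function.update x i s)) (0, Pi.single i 1) (x i) :=
    (hasDerivAt_const (x i) t).prodMk (hasDerivAt_update x i (x i))
  exact ((hd (t, x)).hasFDerivAt.comp_hasDerivAt_of_eq (x i) hl (by simp)).deriv

lemma contDiff_fderiv_dir {n : ℕ} {f : ℝ × (Fin n → ℝ) → ℝ} (hf : ContDiff ℝ (⊤ : ℕ∞) f)
    (v : ℝ × (Fin n → ℝ)) : ContDiff ℝ (⊤ : ℕ∞) (fun p => fderiv ℝ f p v) :=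
  (hf.fderiv_right (m := (⊤ : ℕ∞)) (by simp)).clm_apply contDiff_const

lemma contDiff_pd0 {n : ℕ} {f : ℝ × (Fin n → ℝ) → ℝ} (hf : ContDiff ℝ (⊤ : ℕ∞) f) :
    ContDiff ℝ (⊤ : ℕ∞) (pd0 f) := by
  rw [pd0_eq_fderiv hf]; exact contDiff_fderiv_dir hf _

lemma contDiff_pdS {n : ℕ} {f : ℝ × (Fin n → ℝ) → ℝ} (hf : ContDiff ℝ (⊤ : ℕ∞) f)
    (i : Fin n) : ContDiff ℝ (⊤ : ℕ∞) (pdS i f) := by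
  rw [pdS_eq_fderiv hf]; exact contDiff_fderiv_dir hf _

/-- Symmetry of second derivatives, in terms of iterated directional derivatives. -/
lemma fderiv_dir_comm {n : ℕ} {f : ℝ × (Fin n → ℝ) → ℝ} (hf : ContDiff ℝ (⊤ : ℕ∞) f)
    (v w p : ℝ × (Fin n → ℝ)) :
    fderiv ℝ (fun q => fderiv ℝ f q v) p w = fderiv ℝ (fun q => fderiv ℝ f q w) p v := by
  have h2 : Differentiable ℝ (fderiv ℝ f) :=
    (hf.fderiv_right (m := (⊤ : ℕ∞)) (by simp)).differentiable (by simp)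
  have hs : IsSymmSndFDerivAt ℝ f p :=
    hf.contDiffAt.isSymmSndFDerivAt (by
      rw [minSmoothness_of_isRCLikeNormedField]
      exact WithTop.coe_le_coe.2 (le_top (a := (2 : ℕ∞))))
  have key (v w : ℝ × (Fin n → ℝ)) :
      fderiv ℝ (fun q => fderiv ℝ f q v) p w = fderiv ℝ (fderiv ℝ f) p w v := by
    rw [fderiv_clm_apply (h2 p) (differentiableAt_const v)]
    simp
  rw [key, key]
  exact hs w v

lemma pd0_pdS_comm {n : ℕ} {f : ℝ × (Fin n → ℝ) → ℝ} (hf : ContDiff ℝ (⊤ : ℕ∞) f)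
    (i : Fin n) (p : ℝ × (Fin n → ℝ)) : pd0 (pdS i f) p = pdS i (pd0 f) p := by
  rw [pd0_eq_fderiv (contDiff_pdS hf i), pdS_eq_fderiv (contDiff_pd0 hf) i,
    pd0_eq_fderiv hf, pdS_eq_fderiv hf i]
  exact fderiv_dir_comm hf _ _ p

lemma pdS_pdS_comm {n : ℕ} {f : ℝ × (Fin n → ℝ) → ℝ} (hf : ContDiff ℝ (⊤ : ℕ∞) f)
    (i j : Fin n) (p : ℝ × (Fin n → ℝ)) : pdS i (pdS j f) p = pdS j (pdS i f) p := by
  rw [pdS_eq_fderiv (contDiff_pdS hf j) i, pdS_eq_fderiv (contDiff_pdS hf i) j,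
    pdS_eq_fderiv hf i, pdS_eq_fderiv hf j]
  exact fderiv_dir_comm hf _ _ p

lemma pd0_eq_zero_of_eventuallyEq {n : ℕ} {f : ℝ × (Fin n → ℝ) → ℝ} {p : ℝ × (Fin n → ℝ)}
    (h : f =ᶠ[𝓝 p] 0) : pd0 f p = 0 := by
  have hc : Tendsto (fun s : ℝ => (s, p.2)) (𝓝 p.1) (𝓝 p) := by
    have : Continuous (fun s : ℝ => (s, p.2)) := by fun_prop
    exact this.tendsto p.1
  have h1 : (fun s : ℝ => f (s, p.2)) =ᶠ[𝓝 p.1] fun _ => 0 := hc.eventually h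
  rw [pd0, h1.deriv_eq, deriv_const]

lemma pdS_eq_zero_of_eventuallyEq {n : ℕ} {f : ℝ × (Fin n → ℝ) → ℝ} {p : ℝ × (Fin n → ℝ)}
    (i : Fin n) (h : f =ᶠ[𝓝 p] 0) : pdS i f p = 0 := by
  have hc : Tendsto (fun s : ℝ => (p.1, Function.update p.2 i s)) (𝓝 (p.2 i)) (𝓝 p) := by
    have : Continuous (fun s : ℝ => (p.1, Function.update p.2 i s)) := by fun_prop
    simpa using this.tendsto (p.2 i)
  have h1 : (fun s : ℝ => f (p.1, Function.update p.2 i s)) =ᶠ[𝓝 (p.2 i)] fun _ => 0 :=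
    hc.eventually h
  rw [pdS, h1.deriv_eq, deriv_const]

/-! ### Integrals over time slices -/

lemma integrable_slice {n : ℕ} {f : ℝ × (Fin n → ℝ) → ℝ} (hf : Continuous f)
    {K : Set (Fin n → ℝ)} (hK : IsCompact K) {t : ℝ} (h0 : ∀ x ∉ K, f (t, x) = 0) :
    Integrable (fun x : Fin n → ℝ => f (t, x)) :=
  Continuous.integrable_of_hasCompactSupport (by fun_prop) (HasCompactSupport.intro hK h0)

/-- The spatial divergence theorem for compactly supported slices, from integration by parts
against the constant function `1`. -/
lemma integral_pdS_eq_zero {n : ℕ} {f : ℝ × (Fin n → ℝ) → ℝ} (hf : ContDiff ℝ (⊤ : ℕ∞) f)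
    {K : Set (Fin n → ℝ)} (hK : IsCompact K) {t : ℝ} (h0 : ∀ x ∉ K, f (t, x) = 0)
    (i : Fin n) (h1 : ∀ x ∉ K, pdS i f (t, x) = 0) :
    ∫ x : Fin n → ℝ, pdS i f (t, x) = 0 := by
  have hd : Differentiable ℝ f := hf.differentiable (by simp)
  have key : ∀ x : Fin n → ℝ,
      fderiv ℝ (fun y => f (t, y)) x (Pi.single i 1) = pdS i f (t, x) := by
    intro x
    have hl : HasFDerivAt (fun y : Fin n → ℝ => (t, y))
        (ContinuousLinearMap.inr ℝ ℝ (Fin n → ℝ)) x := hasFDerivAt_prodMk_right t x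
    have := ((hd (t, x)).hasFDerivAt.comp x hl).fderiv
    rw [pdS_eq_fderiv hf]
    change fderiv ℝ (f ∘ fun y => (t, y)) x _ = _
    rw [this]; simp
  have hi := integrable_slice (contDiff_pdS hf i).continuous hK h1
  have := integral_mul_fderiv_eq_neg_fderiv_mul_of_integrable (μ := (volume : Measure (Fin n → ℝ)))
    (f := fun _ => (1 : ℝ)) (g := fun y => f (t, y)) (v := Pi.single i 1)
    (by simp) (by simpa [key] using hi)
    (by simpa using integrable_slice hf.continuous hK h0)
    (by intro x _; fun_prop) (by intro x _; fun_prop)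
  simpa [key] using this

/-- Differentiation under the integral sign for fields whose spatial support is locally uniformly
compact in time: near `t` the time derivative is dominated by a constant times the indicator of
`K`. -/
lemma hasDerivAt_integral_slice {n : ℕ} {f : ℝ × (Fin n → ℝ) → ℝ}
    (hf : ContDiff ℝ (⊤ : ℕ∞) f) {K : Set (Fin n → ℝ)} (hK : IsCompact K) (t : ℝ)
    (h0 : ∀ s ∈ Set.Ioo (t - 1) (t + 1), ∀ x ∉ K, f (s, x) = 0)
    (h1 : ∀ s ∈ Set.Ioo (t - 1) (t + 1), ∀ x ∉ K, pd0 f (s, x) = 0) :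
    HasDerivAt (fun s => ∫ x : Fin n → ℝ, f (s, x)) (∫ x : Fin n → ℝ, pd0 f (t, x)) t := by
  have hc : Continuous f := hf.continuous
  have hc' : Continuous (pd0 f) := (contDiff_pd0 hf).continuous
  have ht : t ∈ Set.Ioo (t - 1) (t + 1) := by constructor <;> linarith
  obtain ⟨C, hC⟩ := ((isCompact_Icc (a := t - 1) (b := t + 1)).prod hK).exists_bound_of_continuousOn
    hc'.continuousOn
  refine (hasDerivAt_integral_of_dominated_loc_of_deriv_le
    (F := fun s x => f (s, x)) (F' := fun s x => pd0 f (s, x))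
    (s := Set.Ioo (t - 1) (t + 1)) (bound := K.indicator fun _ => C)
    (isOpen_Ioo.mem_nhds ht) (Eventually.of_forall fun s => ?_)
    (integrable_slice hc hK (h0 t ht)) ?_ (Eventually.of_forall fun x s hs => ?_) ?_
    (Eventually.of_forall fun x s _ => pd0_hasDerivAt hf s x)).2
  · exact Continuous.aestronglyMeasurable (by fun_prop)
  · exact Continuous.aestronglyMeasurable (by fun_prop)
  · by_cases hx : x ∈ K
    · rw [Set.indicator_of_mem hx]
      exact hC (s, x) ⟨Set.Ioo_subset_Icc_self hs, hx⟩
    · simp [h1 s hs x hx, Set.indicator_of_notMem hx]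
  · exact (integrable_indicator_iff hK.measurableSet).2
      (integrableOn_const hK.measure_lt_top.ne)

/-! ### Local energy balance -/

/-- The divergence identity behind energy conservation, at a single point. The variables stand for
pointwise values: `l, lt` for `λ, ∂₀λ`, and `a₀, q₀, a, q` for `A0, Π0, A, Π`; a final `t` or `ₜ`
marks `∂₀` and each initial `d` a spatial derivative. The directions of differentiation come first
among the indices and the field component last; `da₀, dq₀, da₀t` are gradients, while `dq m`
is the diagonal derivative `∂ₘΠₘ`. The left side is `∂₀ℋ` before the equations are used. -/
lemma pointwise_balance {n : ℕ} (p₁ p₂ l lt a₀ q₀ a₀t q₀t : ℝ)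
    (a q aₜ qₜ da₀ dq₀ da₀t dq : Fin n → ℝ) (da daₜ : Fin n → Fin n → ℝ)
    (dda : Fin n → Fin n → Fin n → ℝ)
    (hsymm : ∀ i j k, dda i j k = dda j i k) (hp₁ : p₁ ≠ 0)
    (e1 : a₀t = l * q₀ - ∑ i, da i i) (e2 : q₀t = -p₂ * a₀ - ∑ i, dq i)
    (e3 : ∀ i, aₜ i = p₁ * q i - da₀ i)
    (e4 : ∀ i, qₜ i = p₂ * a i - dq₀ i + (1 / p₁) * ((∑ j, dda j j i) - ∑ j, dda i j j)) :
    lt / 2 * q₀ ^ 2 + l * q₀ * q₀t - (q₀t * ∑ m, da m m + q₀ * ∑ m, daₜ m m)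
      + p₁ * ∑ m, q m * qₜ m - ∑ m, (qₜ m * da₀ m + q m * da₀t m)
      + 1 / (2 * p₁) * ((∑ m, ∑ k, 2 * da m k * daₜ m k)
          - ∑ m, ∑ k, (daₜ k m * da m k + da k m * daₜ m k))
      + p₂ * a₀ * a₀t - p₂ * ∑ m, a m * aₜ m
    = 1 / 2 * lt * q₀ ^ 2 + ∑ m, (-(dq₀ m * aₜ m + q₀ * daₜ m m) - (dq m * a₀t + q m * da₀t m)
        + 1 / p₁ * ∑ k, ((dda m m k * aₜ k + da m k * daₜ m k)
            - (daₜ m k * da k m + aₜ k * dda m k m))) := by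
  have s1 : ∑ m, ∑ k, da k m * daₜ m k = ∑ m, ∑ k, daₜ k m * da m k := by
    rw [Finset.sum_comm]; simp only [mul_comm]
  have s1' : ∑ m, ∑ k, daₜ m k * da k m = ∑ m, ∑ k, daₜ k m * da m k := by
    rw [Finset.sum_comm]
  have s2 : ∑ m, ∑ k, dda m m k * aₜ k = ∑ m, aₜ m * ∑ j, dda j j m := by
    rw [Finset.sum_comm]; simp only [Finset.mul_sum, mul_comm]
  have s3 : ∑ m, ∑ k, aₜ k * dda m k m = ∑ m, aₜ m * ∑ j, dda m j j := by
    rw [Finset.sum_comm]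
    simp only [Finset.mul_sum]
    exact Finset.sum_congr rfl fun m _ => Finset.sum_congr rfl fun j _ => by rw [hsymm]
  -- `∑ Π̇ₘ Ȧₘ`, evaluated through each of the two vector equations.
  have w1 : ∑ m, qₜ m * aₜ m = p₁ * ∑ m, q m * qₜ m - ∑ m, qₜ m * da₀ m := by
    rw [Finset.mul_sum, ← Finset.sum_sub_distrib]
    exact Finset.sum_congr rfl fun m _ => by rw [e3]; ring
  have w2 : ∑ m, qₜ m * aₜ m = p₂ * ∑ m, a m * aₜ m - ∑ m, dq₀ m * aₜ m
      + 1 / p₁ * (∑ m, aₜ m * ∑ j, dda j j m - ∑ m, aₜ m * ∑ j, dda m j j) := by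
    rw [Finset.mul_sum, ← Finset.sum_sub_distrib, ← Finset.sum_sub_distrib, Finset.mul_sum,
      ← Finset.sum_add_distrib]
    exact Finset.sum_congr rfl fun m _ => by rw [e4]; ring
  simp only [Finset.sum_add_distrib, Finset.sum_sub_distrib, Finset.sum_neg_distrib,
    ← Finset.mul_sum, ← Finset.sum_mul, mul_assoc] at *
  rw [s1, s1', s2, s3]
  have hd : ∑ i, da i i = l * q₀ - a₀t := by linarith
  have hq : ∑ i, dq i = -p₂ * a₀ - q₀t := by linarith
  rw [hd, hq]
  have hp : 1 / (2 * p₁) = 1 / 2 * (1 / p₁) := by field_simp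
  rw [hp]
  linear_combination w2 - w1

/-- The energy current whose spatial divergence, together with `½ (∂₀λ) Π₀²`, is the time
derivative of the Hamiltonian density. -/
noncomputable def energyFlux {n : ℕ} (p₁ : ℝ) (A0 Pi0 : ℝ × (Fin n → ℝ) → ℝ)
    (A Pi : Fin n → ℝ × (Fin n → ℝ) → ℝ) (m : Fin n) (p : ℝ × (Fin n → ℝ)) : ℝ :=
  -(Pi0 p * pd0 (A m) p) - Pi m p * pd0 A0 p
    + 1 / p₁ * ∑ k : Fin n, (pdS m (A k) p * pd0 (A k) p - pd0 (A k) p * pdS k (A m) p)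

lemma contDiff_energyFlux {n : ℕ} (p₁ : ℝ) {A0 Pi0 : ℝ × (Fin n → ℝ) → ℝ}
    {A Pi : Fin n → ℝ × (Fin n → ℝ) → ℝ}
    (hA0 : ContDiff ℝ (⊤ : ℕ∞) A0) (hPi0 : ContDiff ℝ (⊤ : ℕ∞) Pi0)
    (hA : ∀ i, ContDiff ℝ (⊤ : ℕ∞) (A i)) (hPi : ∀ i, ContDiff ℝ (⊤ : ℕ∞) (Pi i)) (m : Fin n) :
    ContDiff ℝ (⊤ : ℕ∞) (energyFlux p₁ A0 Pi0 A Pi m) := by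
  have h1 := contDiff_pd0 hA0
  have h2 := fun k => contDiff_pd0 (hA k)
  have h3 := fun i k => contDiff_pdS (hA k) i
  unfold energyFlux
  fun_prop

lemma contDiff_hamDens {n : ℕ} (p₁ p₂ : ℝ) {A0 Pi0 lam : ℝ × (Fin n → ℝ) → ℝ}
    {A Pi : Fin n → ℝ × (Fin n → ℝ) → ℝ}
    (hA0 : ContDiff ℝ (⊤ : ℕ∞) A0) (hPi0 : ContDiff ℝ (⊤ : ℕ∞) Pi0)
    (hlam : ContDiff ℝ (⊤ : ℕ∞) lam)
    (hA : ∀ i, ContDiff ℝ (⊤ : ℕ∞) (A i)) (hPi : ∀ i, ContDiff ℝ (⊤ : ℕ∞) (Pi i)) :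
    ContDiff ℝ (⊤ : ℕ∞) (hamDens p₁ p₂ A0 Pi0 lam A Pi) := by
  have h1 := fun i => contDiff_pdS hA0 i
  have h3 := fun i k => contDiff_pdS (hA k) i
  unfold hamDens
  fun_prop

lemma pdS_energyFlux {n : ℕ} (p₁ : ℝ) {A0 Pi0 : ℝ × (Fin n → ℝ) → ℝ}
    {A Pi : Fin n → ℝ × (Fin n → ℝ) → ℝ}
    (hA0 : ContDiff ℝ (⊤ : ℕ∞) A0) (hPi0 : ContDiff ℝ (⊤ : ℕ∞) Pi0)
    (hA : ∀ i, ContDiff ℝ (⊤ : ℕ∞) (A i)) (hPi : ∀ i, ContDiff ℝ (⊤ : ℕ∞) (Pi i)) (m : Fin n)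
    (p : ℝ × (Fin n → ℝ)) :
    pdS m (energyFlux p₁ A0 Pi0 A Pi m) p =
      -(pdS m Pi0 p * pd0 (A m) p + Pi0 p * pd0 (pdS m (A m)) p)
        - (pdS m (Pi m) p * pd0 A0 p + Pi m p * pd0 (pdS m A0) p)
        + 1 / p₁ * ∑ k, ((pdS m (pdS m (A k)) p * pd0 (A k) p
              + pdS m (A k) p * pd0 (pdS m (A k)) p)
            - (pd0 (pdS m (A k)) p * pdS k (A m) p + pd0 (A k) p * pdS m (pdS k (A m)) p)) := by
  obtain ⟨t, x⟩ := p
  have h := fun {f : ℝ × (Fin n → ℝ) → ℝ} (hf : ContDiff ℝ (⊤ : ℕ∞) f) => pdS_hasDerivAt hf m t x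
  have h1 := ((((h hPi0).mul (h (contDiff_pd0 (hA m)))).neg).sub
    ((h (hPi m)).mul (h (contDiff_pd0 hA0)))).add
    (HasDerivAt.const_mul (1 / p₁) (HasDerivAt.fun_sum (u := Finset.univ) fun k _ =>
      ((h (contDiff_pdS (hA k) m)).mul (h (contDiff_pd0 (hA k)))).sub
        ((h (contDiff_pd0 (hA k))).mul (h (contDiff_pdS (hA m) k)))))
  refine (HasDerivAt.deriv (f := fun s => energyFlux p₁ A0 Pi0 A Pi m (t, Function.update x m s))
    h1).trans ?_
  simp only [Function.update_eq_self, pd0_pdS_comm hA0, pd0_pdS_comm (hA _)]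

/-- Local energy balance: on solutions, `∂₀ℋ = ½ (∂₀λ) Π₀² + div F`. -/
lemma pd0_hamDens {n : ℕ} (p₁ p₂ : ℝ) (hp₁ : p₁ ≠ 0)
    {A0 Pi0 lam : ℝ × (Fin n → ℝ) → ℝ} {A Pi : Fin n → ℝ × (Fin n → ℝ) → ℝ}
    (hA0 : ContDiff ℝ (⊤ : ℕ∞) A0) (hPi0 : ContDiff ℝ (⊤ : ℕ∞) Pi0)
    (hlam : ContDiff ℝ (⊤ : ℕ∞) lam)
    (hA : ∀ i, ContDiff ℝ (⊤ : ℕ∞) (A i)) (hPi : ∀ i, ContDiff ℝ (⊤ : ℕ∞) (Pi i))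
    (e1 : ∀ p, pd0 A0 p = lam p * Pi0 p - ∑ i : Fin n, pdS i (A i) p)
    (e2 : ∀ p, pd0 Pi0 p = -p₂ * A0 p - ∑ i : Fin n, pdS i (Pi i) p)
    (e3 : ∀ (i : Fin n) (p), pd0 (A i) p = p₁ * Pi i p - pdS i A0 p)
    (e4 : ∀ (i : Fin n) (p), pd0 (Pi i) p = p₂ * A i p - pdS i Pi0 p
        + (1 / p₁) * ((∑ j : Fin n, pdS j (pdS j (A i)) p)
            - pdS i (fun q => ∑ j : Fin n, pdS j (A j) q) p))
    (p : ℝ × (Fin n → ℝ)) :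
    pd0 (hamDens p₁ p₂ A0 Pi0 lam A Pi) p =
      1 / 2 * pd0 lam p * Pi0 p ^ 2 + ∑ m, pdS m (energyFlux p₁ A0 Pi0 A Pi m) p := by
  have e4' : ∀ i, pd0 (Pi i) p = p₂ * A i p - pdS i Pi0 p
      + (1 / p₁) * ((∑ j, pdS j (pdS j (A i)) p) - ∑ j, pdS i (pdS j (A j)) p) := by
    intro i
    rw [e4]
    congr 3
    exact (HasDerivAt.fun_sum (u := Finset.univ) fun j _ =>
      pdS_hasDerivAt (contDiff_pdS (hA j) j) i p.1 p.2).deriv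
  have bal := pointwise_balance p₁ p₂ (lam p) (pd0 lam p) (A0 p) (Pi0 p) (pd0 A0 p) (pd0 Pi0 p)
    (fun m => A m p) (fun m => Pi m p) (fun m => pd0 (A m) p) (fun m => pd0 (Pi m) p)
    (fun m => pdS m A0 p) (fun m => pdS m Pi0 p) (fun m => pd0 (pdS m A0) p)
    (fun m => pdS m (Pi m) p) (fun m k => pdS m (A k) p) (fun m k => pd0 (pdS m (A k)) p)
    (fun i j k => pdS i (pdS j (A k)) p) (fun i j k => pdS_pdS_comm (hA k) i j p) hp₁
    (e1 p) (e2 p) (fun i => e3 i p) e4'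
  simp only [pdS_energyFlux p₁ hA0 hPi0 hA hPi]
  refine Eq.trans ?_ bal
  obtain ⟨t, x⟩ := p
  have h := fun {f : ℝ × (Fin n → ℝ) → ℝ} (hf : ContDiff ℝ (⊤ : ℕ∞) f) => pd0_hasDerivAt hf t x
  have d1 := ((h hlam).div_const 2).mul ((h hPi0).pow 2)
  have d2 := (h hPi0).mul (HasDerivAt.fun_sum (u := Finset.univ) fun m _ =>
    h (contDiff_pdS (hA m) m))
  have d3 := HasDerivAt.const_mul (p₁ / 2) (HasDerivAt.fun_sum (u := Finset.univ) fun m _ =>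
    (h (hPi m)).pow 2)
  have d4 := HasDerivAt.fun_sum (u := Finset.univ) fun m _ =>
    (h (hPi m)).mul (h (contDiff_pdS hA0 m))
  have d5 := HasDerivAt.fun_sum (u := Finset.univ) fun m _ =>
    HasDerivAt.fun_sum (u := Finset.univ) fun k _ => (h (contDiff_pdS (hA k) m)).pow 2
  have d6 := HasDerivAt.fun_sum (u := Finset.univ) fun m _ =>
    HasDerivAt.fun_sum (u := Finset.univ) fun k _ =>
      (h (contDiff_pdS (hA m) k)).mul (h (contDiff_pdS (hA k) m))
  have d7 := HasDerivAt.const_mul (p₂ / 2) ((h hA0).pow 2)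
  have d8 := HasDerivAt.const_mul (p₂ / 2) (HasDerivAt.fun_sum (u := Finset.univ) fun m _ =>
    (h (hA m)).pow 2)
  have d := (((((d1.sub d2).add d3).sub d4).add
    (HasDerivAt.const_mul (1 / (2 * p₁)) (d5.sub d6))).add d7).sub d8
  refine (HasDerivAt.deriv (f := fun s => hamDens p₁ p₂ A0 Pi0 lam A Pi (s, x)) d).trans ?_
  have r (u v : Fin n → ℝ) : ∑ m, 2 * u m * v m = 2 * ∑ m, u m * v m := by
    simp only [Finset.mul_sum, mul_assoc]
  simp only [Nat.cast_ofNat, Nat.add_one_sub_one, pow_one, _root_.Pi.pow_apply, r]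
  ring

/-! ### Conservation of the total Hamiltonian -/

/-- For smooth, spatially compactly supported solutions of the canonical
Stueckelberg–Proca equations with gauge field `λ` bounded (together with `∂₀λ`)
on compact time intervals, the total Hamiltonian `H_C(x⁰) = ∫ ℋ dx` satisfies
`d/dx⁰ H_C = ∫ (1/2)(∂₀λ)Π₀² dx`; in particular `H_C` is constant if `λ` is
independent of `x⁰` or if `Π₀ ≡ 0`. -/
theorem total_hamiltonian_derivative {n : ℕ} (hn : 1 ≤ n) (p₁ p₂ : ℝ) (hp₁ : p₁ ≠ 0)
    (A0 Pi0 lam : ℝ × (Fin n → ℝ) → ℝ) (A Pi : Fin n → ℝ × (Fin n → ℝ) → ℝ)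
    (hA0 : ContDiff ℝ (⊤ : ℕ∞) A0) (hPi0 : ContDiff ℝ (⊤ : ℕ∞) Pi0) (hlam : ContDiff ℝ (⊤ : ℕ∞) lam)
    (hA : ∀ i, ContDiff ℝ (⊤ : ℕ∞) (A i)) (hPi : ∀ i, ContDiff ℝ (⊤ : ℕ∞) (Pi i))
    (e1 : ∀ p, pd0 A0 p = lam p * Pi0 p - ∑ i : Fin n, pdS i (A i) p)
    (e2 : ∀ p, pd0 Pi0 p = -p₂ * A0 p - ∑ i : Fin n, pdS i (Pi i) p)
    (e3 : ∀ (i : Fin n) (p), pd0 (A i) p = p₁ * Pi i p - pdS i A0 p)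
    (e4 : ∀ (i : Fin n) (p), pd0 (Pi i) p = p₂ * A i p - pdS i Pi0 p
        + (1 / p₁) * ((∑ j : Fin n, pdS j (pdS j (A i)) p)
            - pdS i (fun q => ∑ j : Fin n, pdS j (A j) q) p))
    (hsupp : ∀ I : Set ℝ, IsCompact I → ∃ K : Set (Fin n → ℝ), IsCompact K ∧
        ∀ t ∈ I, ∀ x : Fin n → ℝ, x ∉ K →
          A0 (t, x) = 0 ∧ Pi0 (t, x) = 0 ∧ ∀ i : Fin n, A i (t, x) = 0 ∧ Pi i (t, x) = 0)
    (hlamBd : ∀ I : Set ℝ, IsCompact I → ∃ M : ℝ, ∀ t ∈ I, ∀ x : Fin n → ℝ,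
        |lam (t, x)| ≤ M ∧ |pd0 lam (t, x)| ≤ M)
    (HC : ℝ → ℝ)
    (hHC : HC = fun t => ∫ x : Fin n → ℝ, hamDens p₁ p₂ A0 Pi0 lam A Pi (t, x)) :
    (∀ t : ℝ, HasDerivAt HC
        (∫ x : Fin n → ℝ, (1 / 2) * pd0 lam (t, x) * Pi0 (t, x) ^ 2) t) ∧
    (((∀ (t s : ℝ) (x : Fin n → ℝ), lam (t, x) = lam (s, x)) ∨ (∀ p, Pi0 p = 0)) →
      ∀ s t : ℝ, HC s = HC t) := by
  subst hHC
  have hH := contDiff_hamDens p₁ p₂ hA0 hPi0 hlam hA hPi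
  have hF := contDiff_energyFlux p₁ hA0 hPi0 hA hPi
  have main : ∀ t : ℝ, HasDerivAt
      (fun t => ∫ x : Fin n → ℝ, hamDens p₁ p₂ A0 Pi0 lam A Pi (t, x))
      (∫ x : Fin n → ℝ, (1 / 2) * pd0 lam (t, x) * Pi0 (t, x) ^ 2) t := by
    intro t
    obtain ⟨K, hK, hz⟩ := hsupp (Set.Icc (t - 1) (t + 1)) isCompact_Icc
    have ht : t ∈ Set.Ioo (t - 1) (t + 1) := by constructor <;> linarith
    -- All fields vanish on the open set `U`, hence so do their derivatives there.
    set U : Set (ℝ × (Fin n → ℝ)) := Set.Ioo (t - 1) (t + 1) ×ˢ Kᶜ with hU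
    have hUo : IsOpen U := isOpen_Ioo.prod hK.isClosed.isOpen_compl
    have near {f : ℝ × (Fin n → ℝ) → ℝ} (hf : ∀ p ∈ U, f p = 0) (p) (hp : p ∈ U) :
        f =ᶠ[𝓝 p] 0 := by
      filter_upwards [hUo.mem_nhds hp] with q hq using hf q hq
    have zz := fun (p : ℝ × (Fin n → ℝ)) (hp : p ∈ U) =>
      hz p.1 (Set.Ioo_subset_Icc_self hp.1) p.2 hp.2
    have zA0 : ∀ p ∈ U, A0 p = 0 := fun p hp => (zz p hp).1
    have zPi0 : ∀ p ∈ U, Pi0 p = 0 := fun p hp => (zz p hp).2.1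
    have zA : ∀ m, ∀ p ∈ U, A m p = 0 := fun m p hp => ((zz p hp).2.2 m).1
    have zPi : ∀ m, ∀ p ∈ U, Pi m p = 0 := fun m p hp => ((zz p hp).2.2 m).2
    have zdA : ∀ i m, ∀ p ∈ U, pdS i (A m) p = 0 := fun i m p hp =>
      pdS_eq_zero_of_eventuallyEq i (near (zA m) p hp)
    have zH : ∀ p ∈ U, hamDens p₁ p₂ A0 Pi0 lam A Pi p = 0 := fun p hp => by
      simp [hamDens, zA0 p hp, zPi0 p hp, zA _ p hp, zPi _ p hp, zdA _ _ p hp]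
    have zF : ∀ m, ∀ p ∈ U, energyFlux p₁ A0 Pi0 A Pi m p = 0 := fun m p hp => by
      simp [energyFlux, zPi0 p hp, zPi _ p hp, zdA _ _ p hp]
    have zdF : ∀ m, ∀ p ∈ U, pdS m (energyFlux p₁ A0 Pi0 A Pi m) p = 0 := fun m p hp =>
      pdS_eq_zero_of_eventuallyEq m (near (zF m) p hp)
    have hder := hasDerivAt_integral_slice hH hK t (fun s hs x hx => zH _ ⟨hs, hx⟩)
      (fun s hs x hx => pd0_eq_zero_of_eventuallyEq (near zH _ ⟨hs, hx⟩))
    convert hder using 1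
    simp only [pd0_hamDens p₁ p₂ hp₁ hA0 hPi0 hlam hA hPi e1 e2 e3 e4]
    have hi : ∀ m, Integrable (fun x : Fin n → ℝ => pdS m (energyFlux p₁ A0 Pi0 A Pi m) (t, x)) :=
      fun m => integrable_slice (contDiff_pdS (hF m) m).continuous hK
        fun x hx => zdF m _ ⟨ht, hx⟩
    have hl : Continuous fun p => 1 / 2 * pd0 lam p * Pi0 p ^ 2 := by
      have := (contDiff_pd0 hlam).continuous
      have := hPi0.continuous
      fun_prop
    rw [integral_add (integrable_slice hl hK fun x hx => by simp [zPi0 (t, x) ⟨ht, hx⟩])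
      (integrable_finsetSum _ fun m _ => hi m), integral_finsetSum _ fun m _ => hi m]
    rw [Finset.sum_eq_zero fun m _ => integral_pdS_eq_zero (hF m) hK
      (fun x hx => zF m _ ⟨ht, hx⟩) m (fun x hx => zdF m _ ⟨ht, hx⟩), add_zero]
  refine ⟨main, fun hcase s t => is_const_of_deriv_eq_zero
    (fun t => (main t).differentiableAt) (fun t => ?_) s t⟩
  rw [(main t).deriv]
  rcases hcase with hc | hc
  · have : ∀ x : Fin n → ℝ, pd0 lam (t, x) = 0 := fun x => by
      simp only [pd0]
      rw [funext fun s => hc s t x, deriv_const]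
    simp [this]
  · simp [hc]
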